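/- arXiv:1910.03702 — 4 statements merged into one kernel-verified Lean document; each statement's English description precedes it below -/
import Mathlib

section
/- Let n ≥ 1, let T = diag(τ₁, …, τₙ) be a fixed n×n diagonal matrix with non-negative entries, and let W be a random n×n orthogonal matrix distributed according to the Haar probability measure on the orthogonal group O(n). Let k ≥ 1 be an integer and let m be an even positive integer. Then there exists a constant C_{k,m} > 0 depending only on k and m such that for all indices i, j ∈ {1, …, n}, the expectation of the m-th power of the (i,j)-entry of the matrix (T W)^k T satisfies E[ ((T W)^k T)_{ij}^m ] ≤ C_{k,m} · τᵢ^m · τⱼ^m · ‖T‖_HS^{m(k-1)} · n^{-km/2}. -/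
/-!
The `(i, j)` entry of `(T W)^(k+1) T` is `τ i * τ j` times a sum over paths `p` of length `k`, each
path contributing `∏ τ (p l)` times a product of `k + 1` entries of `W`
(`entry_eq_sum_paths`). The `m`-th power is a sum over families `q` of `m` paths. Haar invariance
under the diagonal sign matrices `D_ε` shows that the expectation attached to `q` is unchanged by
the factor `φ_q(ε) = ∏ ε (q s l)`, a character of the group of signs (the `m` copies of the row
index `i` cancel as `m` is even). Hence this expectation may be replaced by its uniform bound times
the average of `φ_q` over all signs, and the sum over `q` collapses to the average of
`(∑ ε_c τ_c) ^ (k m)`, which Khintchine's inequality (`khintchine`) bounds by a constant times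
`‖T‖_HS ^ (k m)`.

The uniform bound is a moment bound for one entry (`moment_entry`). Multiplying `W` by an
orthogonal matrix with a constant row replaces `W a b` by `(∑ c, W c b) / √n`; inserting
signs by invariance again and averaging, Khintchine's inequality applies pointwise to the columns of
`W`, which are unit vectors. Khintchine itself follows from `x ^ N ≤ N! (exp x + exp (-x))` and
`cosh t ≤ exp (t ^ 2 / 2)`.
-/

open MeasureTheory ProbabilityTheory

/-- Matrices over ℝ carry the product measurable structure (entrywise). -/
instance matrixMeasurableSpace (m n : Type*) : MeasurableSpace (Matrix m n ℝ) :=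
  inferInstanceAs (MeasurableSpace (m → n → ℝ))

/-- The Hilbert--Schmidt norm of a real square matrix. -/
noncomputable def hsNorm {n : ℕ} (A : Matrix (Fin n) (Fin n) ℝ) : ℝ :=
  Real.sqrt (∑ i, ∑ j, (A i j) ^ 2)

/-! ### Khintchine's inequality -/

theorem sum_exp_signs {n : ℕ} (t : Fin n → ℝ) :
    ∑ ε : Fin n → ℤˣ, Real.exp (∑ c, ((ε c : ℤ) : ℝ) * t c)
      ≤ 2 ^ n * Real.exp ((∑ c, t c ^ 2) / 2) := by
  have h1 : ∑ ε : Fin n → ℤˣ, Real.exp (∑ c, ((ε c : ℤ) : ℝ) * t c)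
      = ∏ c, ∑ e : ℤˣ, Real.exp (((e : ℤ) : ℝ) * t c) := by
    rw [Finset.prod_univ_sum, Fintype.piFinset_univ]
    exact Finset.sum_congr rfl fun ε _ => Real.exp_sum _ _
  have h2 : (2 : ℝ) ^ n * Real.exp ((∑ c, t c ^ 2) / 2)
      = ∏ c, (2 * Real.exp (t c ^ 2 / 2)) := by
    rw [Finset.prod_mul_distrib, ← Real.exp_sum, Finset.sum_div]
    simp
  rw [h1, h2]
  refine Finset.prod_le_prod (fun c _ => Finset.sum_nonneg fun e _ => (Real.exp_pos _).le) ?_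
  intro c _
  have h3 := Real.cosh_le_exp_half_sq (t c)
  rw [Real.cosh_eq] at h3
  rw [UnitsInt.univ, Finset.sum_pair (by decide)]
  simp only [Units.val_one, Int.cast_one, one_mul, Units.val_neg, Int.cast_neg, neg_mul]
  linarith

theorem pow_le_factorial_mul_exp {N : ℕ} (hN : Even N) (x : ℝ) :
    x ^ N ≤ N.factorial * (Real.exp x + Real.exp (-x)) := by
  have h := Real.pow_div_factorial_le_exp |x| (abs_nonneg x) N
  rw [div_le_iff₀ (by positivity), hN.pow_abs] at h
  have h2 : Real.exp |x| ≤ Real.exp x + Real.exp (-x) := Real.exp_abs_le x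
  have h3 : (0 : ℝ) < N.factorial := by positivity
  nlinarith

/-- The constant in Khintchine's inequality for the moment of order `N`. -/
noncomputable def khC (N : ℕ) : ℝ := N.factorial * (2 * Real.exp (1 / 2))

theorem one_le_khC (N : ℕ) : 1 ≤ khC N := by
  have h1 : (1 : ℝ) ≤ N.factorial := by exact_mod_cast N.factorial_pos
  have h2 : 1 ≤ Real.exp (1 / 2) := Real.one_le_exp (by norm_num)
  unfold khC
  nlinarith

/-- Khintchine's inequality for even moments, as a sum over all `2 ^ n` sign vectors. -/
theorem khintchine {n N : ℕ} (hN : Even N) (t : Fin n → ℝ) :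
    ∑ ε : Fin n → ℤˣ, (∑ c, ((ε c : ℤ) : ℝ) * t c) ^ N
      ≤ 2 ^ n * (khC N * Real.sqrt (∑ c, t c ^ 2) ^ N) := by
  set s := Real.sqrt (∑ c, t c ^ 2) with hs
  have hsum0 : 0 ≤ ∑ c, t c ^ 2 := Finset.sum_nonneg fun c _ => sq_nonneg _
  rcases (Real.sqrt_nonneg (∑ c, t c ^ 2)).eq_or_lt with h0 | hpos
  · have ht : ∀ c, t c = 0 := by
      have h1 : ∑ c, t c ^ 2 = 0 := (Real.sqrt_eq_zero hsum0).1 h0.symm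
      intro c
      have h2 := (Finset.sum_eq_zero_iff_of_nonneg (fun c _ => sq_nonneg (t c))).1 h1 c
        (Finset.mem_univ c)
      exact pow_eq_zero_iff (two_ne_zero) |>.1 h2
    have hs0 : s = 0 := h0.symm
    simp only [ht, hs0, mul_zero, Finset.sum_const_zero, Finset.sum_const, nsmul_eq_mul]
    have h4 : (Finset.univ : Finset (Fin n → ℤˣ)).card = 2 ^ n := by
      simp
    rw [h4]
    push_cast
    have h5 : (0 : ℝ) ≤ 0 ^ N := by positivity
    have := one_le_khC N
    gcongr
    nlinarith
  · have hs2 : s ^ 2 = ∑ c, t c ^ 2 := Real.sq_sqrt hsum0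
    have hspos : 0 < s := hpos
    -- Normalising to unit Euclidean norm turns the subgaussian bound into an absolute constant.
    have hnorm : ∑ c, (t c / s) ^ 2 = 1 := by
      simp only [div_pow]
      rw [← Finset.sum_div, ← hs2]
      exact div_self (by positivity)
    have hnorm' : ∑ c, (-(t c / s)) ^ 2 = 1 := by
      simpa only [neg_sq] using hnorm
    have e1 := sum_exp_signs (fun c => t c / s)
    have e2 := sum_exp_signs (fun c => -(t c / s))
    rw [hnorm] at e1
    rw [hnorm'] at e2
    have key : ∑ ε : Fin n → ℤˣ, (∑ c, ((ε c : ℤ) : ℝ) * (t c / s)) ^ N ≤ 2 ^ n * khC N := by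
      calc _ ≤ ∑ ε : Fin n → ℤˣ, N.factorial * (Real.exp (∑ c, ((ε c : ℤ) : ℝ) * (t c / s))
              + Real.exp (∑ c, ((ε c : ℤ) : ℝ) * (-(t c / s)))) := by
            refine Finset.sum_le_sum fun ε _ => ?_
            have := pow_le_factorial_mul_exp hN (∑ c, ((ε c : ℤ) : ℝ) * (t c / s))
            simpa only [mul_neg, Finset.sum_neg_distrib] using this
        _ ≤ _ := by
            rw [← Finset.mul_sum, Finset.sum_add_distrib, khC]
            have h3 : (0 : ℝ) < N.factorial := by positivity
            nlinarith
    have hscale : ∀ ε : Fin n → ℤˣ, (∑ c, ((ε c : ℤ) : ℝ) * t c) ^ N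
        = s ^ N * (∑ c, ((ε c : ℤ) : ℝ) * (t c / s)) ^ N := by
      intro ε
      rw [← mul_pow, Finset.mul_sum]
      congr 1
      refine Finset.sum_congr rfl fun c _ => ?_
      field_simp
    simp only [hscale]
    rw [← Finset.mul_sum]
    calc _ ≤ s ^ N * (2 ^ n * khC N) := by gcongr
      _ = _ := by ring

/-! ### Expansion over paths -/

theorem entry_eq_sum_paths {n : ℕ} (τ : Fin n → ℝ) (W : Matrix (Fin n) (Fin n) ℝ) (k : ℕ)
    (i j : Fin n) :
    ((Matrix.diagonal τ * W) ^ (k + 1) * Matrix.diagonal τ) i j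
      = τ i * τ j * ∑ p : Fin k → Fin n, (∏ l, τ (p l)) *
          ∏ l : Fin (k + 1), W ((Fin.cons i p : Fin (k + 1) → Fin n) l)
            ((Fin.snoc p j : Fin (k + 1) → Fin n) l) := by
  induction k generalizing i with
  | zero =>
    simp [Matrix.mul_diagonal, Matrix.diagonal_mul, Fin.snoc]
    ring
  | succ k ih =>
    rw [pow_succ', Matrix.mul_assoc, Matrix.mul_apply]
    simp only [ih, Matrix.diagonal_mul]
    rw [← (Fin.consEquiv (fun _ : Fin (k + 1) => Fin n)).sum_comp, Fintype.sum_prod_type,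
      Finset.mul_sum]
    refine Finset.sum_congr rfl fun a _ => ?_
    rw [Finset.mul_sum, Finset.mul_sum, Finset.mul_sum]
    refine Finset.sum_congr rfl fun p _ => ?_
    rw [Fin.prod_univ_succ (n := k + 1), Fin.prod_univ_succ (n := k)
      (fun l => τ ((Fin.consEquiv (fun _ : Fin (k + 1) => Fin n)) (a, p) l))]
    have hcons : (Fin.consEquiv (fun _ : Fin (k + 1) => Fin n)) (a, p)
        = (Fin.cons a p : Fin (k + 1) → Fin n) := rfl
    simp only [hcons, Fin.cons_zero, Fin.cons_succ]
    rw [← Fin.cons_snoc_eq_snoc_cons]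
    simp only [Fin.cons_zero, Fin.cons_succ]
    ring

/-! ### Left invariance on the orthogonal group -/

section Haar

variable {n : ℕ}

theorem measurable_entry (a b : Fin n) :
    Measurable fun W : Matrix.orthogonalGroup (Fin n) ℝ => (W : Matrix (Fin n) (Fin n) ℝ) a b :=
  (measurable_pi_apply b).comp ((measurable_pi_apply a).comp measurable_subtype_coe)

theorem sum_sq_col (W : Matrix.orthogonalGroup (Fin n) ℝ) (b : Fin n) :
    ∑ c, (W : Matrix (Fin n) (Fin n) ℝ) c b ^ 2 = 1 := by
  have h := congrFun (congrFun ((Matrix.mem_orthogonalGroup_iff' _ _).1 W.2) b) b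
  simpa [Matrix.mul_apply, sq] using h

theorem abs_entry_le_one (W : Matrix.orthogonalGroup (Fin n) ℝ) (a b : Fin n) :
    |(W : Matrix (Fin n) (Fin n) ℝ) a b| ≤ 1 := by
  rw [← sq_le_one_iff_abs_le_one, ← sum_sq_col W b]
  exact Finset.single_le_sum (f := fun c => (W : Matrix (Fin n) (Fin n) ℝ) c b ^ 2)
    (fun c _ => sq_nonneg _) (Finset.mem_univ a)

theorem measurable_mul_left_orth (g : Matrix.orthogonalGroup (Fin n) ℝ) :
    Measurable fun W : Matrix.orthogonalGroup (Fin n) ℝ => g * W := by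
  refine Measurable.subtype_mk (measurable_pi_iff.2 fun a => measurable_pi_iff.2 fun b => ?_)
  change Measurable fun W : Matrix.orthogonalGroup (Fin n) ℝ =>
    ((g : Matrix (Fin n) (Fin n) ℝ) * (W : Matrix (Fin n) (Fin n) ℝ)) a b
  simp only [Matrix.mul_apply]
  exact Finset.measurable_sum _ fun c _ => (measurable_entry c b).const_mul _

theorem measurable_mul_right_orth (g : Matrix.orthogonalGroup (Fin n) ℝ) :
    Measurable fun W : Matrix.orthogonalGroup (Fin n) ℝ => W * g := by
  refine Measurable.subtype_mk (measurable_pi_iff.2 fun a => measurable_pi_iff.2 fun b => ?_)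
  change Measurable fun W : Matrix.orthogonalGroup (Fin n) ℝ =>
    ((W : Matrix (Fin n) (Fin n) ℝ) * (g : Matrix (Fin n) (Fin n) ℝ)) a b
  simp only [Matrix.mul_apply]
  exact Finset.measurable_sum _ fun c _ => (measurable_entry a c).mul_const _

instance : MeasurableMul (Matrix.orthogonalGroup (Fin n) ℝ) where
  measurable_const_mul := measurable_mul_left_orth
  measurable_mul_const := measurable_mul_right_orth

/-- The diagonal orthogonal matrix with the signs `ε` on its diagonal. -/
def signMat (ε : Fin n → ℤˣ) : Matrix.orthogonalGroup (Fin n) ℝ :=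
  ⟨Matrix.diagonal fun c => ((ε c : ℤ) : ℝ), by
    rw [Matrix.mem_orthogonalGroup_iff,
      Matrix.diagonal_transpose, Matrix.diagonal_mul_diagonal, ← Matrix.diagonal_one]
    congr 1
    funext c
    rcases Int.units_eq_one_or (ε c) with h | h <;> simp [h]⟩

theorem signMat_mul_apply (ε : Fin n → ℤˣ) (W : Matrix.orthogonalGroup (Fin n) ℝ) (a b : Fin n) :
    ((signMat ε * W : Matrix.orthogonalGroup (Fin n) ℝ) : Matrix (Fin n) (Fin n) ℝ) a b
      = ((ε a : ℤ) : ℝ) * (W : Matrix (Fin n) (Fin n) ℝ) a b :=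
  Matrix.diagonal_mul _ _ _ _

theorem exists_orth_const_row (hn : 1 ≤ n) (a : Fin n) :
    ∃ R : Matrix.orthogonalGroup (Fin n) ℝ,
      ∀ c, (R : Matrix (Fin n) (Fin n) ℝ) a c = (Real.sqrt n)⁻¹ := by
  have hn0 : (0 : ℝ) < n := by exact_mod_cast hn
  let u : EuclideanSpace ℝ (Fin n) := WithLp.toLp 2 fun _ => (Real.sqrt n)⁻¹
  have hu : ‖u‖ = 1 := by
    rw [EuclideanSpace.norm_eq]
    simp [u, hn0.ne', abs_of_nonneg]
  have hv : Orthonormal ℝ (({a} : Set (Fin n)).domRestrict fun _ => u) := by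
    constructor
    · intro x
      exact hu
    · intro x y hxy
      exact absurd (Subsingleton.elim x y) hxy
  obtain ⟨b, hb⟩ := hv.exists_orthonormalBasis_extension_of_card_eq (by simp)
  have hba : b a = u := hb a rfl
  refine ⟨⟨Matrix.of fun r c => b r c, ?_⟩, fun c => ?_⟩
  · rw [Matrix.mem_orthogonalGroup_iff]
    ext r s
    have h := orthonormal_iff_ite.1 b.orthonormal r s
    rw [PiLp.inner_apply] at h
    simp only [Matrix.mul_apply, Matrix.transpose_apply, Matrix.of_apply, Matrix.one_apply]
    rw [← h]
    refine Finset.sum_congr rfl fun c _ => ?_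
    simp [mul_comm]
  · simp [hba, u]

/-! ### Moments of entries -/

variable (μ : Measure (Matrix.orthogonalGroup (Fin n) ℝ)) [IsProbabilityMeasure μ]

/-- Moments of a single entry of `W` have the order of magnitude of Gaussian ones. -/
theorem moment_entry [μ.IsMulLeftInvariant] (hn : 1 ≤ n) {N : ℕ} (hN : Even N) (a b : Fin n) :
    ∫ W, (W : Matrix (Fin n) (Fin n) ℝ) a b ^ N ∂μ ≤ (Real.sqrt n)⁻¹ ^ N * khC N := by
  obtain ⟨R, hR⟩ := exists_orth_const_row hn a
  have h1 : ∫ W, (W : Matrix (Fin n) (Fin n) ℝ) a b ^ N ∂μ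
      = (Real.sqrt n)⁻¹ ^ N * ∫ W, (∑ c, (W : Matrix (Fin n) (Fin n) ℝ) c b) ^ N ∂μ := by
    rw [← integral_mul_left_eq_self _ R, ← integral_const_mul]
    refine integral_congr_ae (Filter.Eventually.of_forall fun W => ?_)
    have : ((R * W : Matrix.orthogonalGroup (Fin n) ℝ) : Matrix (Fin n) (Fin n) ℝ) a b
        = (Real.sqrt n)⁻¹ * ∑ c, (W : Matrix (Fin n) (Fin n) ℝ) c b := by
      change ((R : Matrix (Fin n) (Fin n) ℝ) * (W : Matrix (Fin n) (Fin n) ℝ)) a b = _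
      rw [Matrix.mul_apply, Finset.mul_sum]
      simp only [hR]
    simp only [this, mul_pow]
  have h2 : ∀ ε : Fin n → ℤˣ, ∫ W, (∑ c, (W : Matrix (Fin n) (Fin n) ℝ) c b) ^ N ∂μ
      = ∫ W, (∑ c, ((ε c : ℤ) : ℝ) * (W : Matrix (Fin n) (Fin n) ℝ) c b) ^ N ∂μ := by
    intro ε
    rw [← integral_mul_left_eq_self _ (signMat ε)]
    simp only [signMat_mul_apply]
  have hint : ∀ ε : Fin n → ℤˣ, Integrable (fun W : Matrix.orthogonalGroup (Fin n) ℝ =>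
      (∑ c, ((ε c : ℤ) : ℝ) * (W : Matrix (Fin n) (Fin n) ℝ) c b) ^ N) μ := by
    intro ε
    refine Integrable.of_bound (C := (n : ℝ) ^ N) (Measurable.aestronglyMeasurable
      ((Finset.measurable_sum _ fun c _ => (measurable_entry c b).const_mul _).pow_const N))
      (Filter.Eventually.of_forall fun W => ?_)
    rw [norm_pow]
    gcongr
    refine (norm_sum_le _ _).trans ?_
    calc _ ≤ ∑ c : Fin n, (1 : ℝ) := by
          refine Finset.sum_le_sum fun c _ => ?_
          rw [norm_mul, Real.norm_eq_abs, Real.norm_eq_abs]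
          have := abs_entry_le_one W c b
          rcases Int.units_eq_one_or (ε c) with h | h <;> simpa [h] using this
      _ = n := by simp
  have h3 : (2 : ℝ) ^ n * ∫ W, (∑ c, (W : Matrix (Fin n) (Fin n) ℝ) c b) ^ N ∂μ
      ≤ 2 ^ n * khC N := by
    calc (2 : ℝ) ^ n * ∫ W, (∑ c, (W : Matrix (Fin n) (Fin n) ℝ) c b) ^ N ∂μ
        = ∑ ε : Fin n → ℤˣ,
            ∫ W, (∑ c, ((ε c : ℤ) : ℝ) * (W : Matrix (Fin n) (Fin n) ℝ) c b) ^ N ∂μ := by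
          rw [← Finset.sum_congr rfl fun ε _ => h2 ε]
          simp
      _ = ∫ W, ∑ ε : Fin n → ℤˣ,
            (∑ c, ((ε c : ℤ) : ℝ) * (W : Matrix (Fin n) (Fin n) ℝ) c b) ^ N ∂μ :=
          (integral_finsetSum _ fun ε _ => hint ε).symm
      _ ≤ ∫ W, 2 ^ n * khC N ∂μ := by
          refine integral_mono (integrable_finsetSum _ fun ε _ => hint ε) (integrable_const _) ?_
          intro W
          have := khintchine hN fun c => (W : Matrix (Fin n) (Fin n) ℝ) c b
          simpa [sum_sq_col] using this
      _ = 2 ^ n * khC N := by simp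
  rw [h1]
  gcongr
  exact le_of_mul_le_mul_left h3 (by positivity)

theorem prod_le_sum_pow {ι : Type*} [Fintype ι] [Nonempty ι] (hN : Even (Fintype.card ι))
    (w : ι → ℝ) : |∏ x, w x| ≤ ∑ x, w x ^ Fintype.card ι := by
  obtain ⟨x₀, -, h⟩ := Finset.exists_max_image Finset.univ (fun x => |w x|) Finset.univ_nonempty
  calc |∏ x, w x| = ∏ x, |w x| := Finset.abs_prod _ _
    _ ≤ ∏ _x : ι, |w x₀| := Finset.prod_le_prod (fun _ _ => abs_nonneg _) fun x hx => h x hx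
    _ = w x₀ ^ Fintype.card ι := by rw [Finset.prod_const, Finset.card_univ, hN.pow_abs]
    _ ≤ _ := Finset.single_le_sum (f := fun x => w x ^ Fintype.card ι)
        (fun x _ => hN.pow_nonneg _) (Finset.mem_univ x₀)

theorem integrable_prod_entries {ι : Type*} [Fintype ι] (x y : ι → Fin n) :
    Integrable (fun W : Matrix.orthogonalGroup (Fin n) ℝ =>
      ∏ s, (W : Matrix (Fin n) (Fin n) ℝ) (x s) (y s)) μ := by
  refine Integrable.of_bound (C := 1) (Measurable.aestronglyMeasurable
    (Finset.measurable_prod _ fun s _ => measurable_entry _ _))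
    (Filter.Eventually.of_forall fun W => ?_)
  rw [Real.norm_eq_abs, Finset.abs_prod]
  exact Finset.prod_le_one (fun _ _ => abs_nonneg _) fun s _ => abs_entry_le_one W _ _

/-- Mixed moments reduce to moments of single entries, since a product of `N` factors is at most the
sum of their absolute `N`-th powers. -/
theorem abs_integral_prod_entries_le [μ.IsMulLeftInvariant] (hn : 1 ≤ n) {ι : Type*} [Fintype ι]
    [Nonempty ι]
    (hN : Even (Fintype.card ι)) (x y : ι → Fin n) :
    |∫ W, ∏ s, (W : Matrix (Fin n) (Fin n) ℝ) (x s) (y s) ∂μ|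
      ≤ Fintype.card ι * ((Real.sqrt n)⁻¹ ^ Fintype.card ι * khC (Fintype.card ι)) := by
  have hint : ∀ s, Integrable (fun W : Matrix.orthogonalGroup (Fin n) ℝ =>
      (W : Matrix (Fin n) (Fin n) ℝ) (x s) (y s) ^ Fintype.card ι) μ := by
    intro s
    have := integrable_prod_entries μ (ι := ι) (fun _ => x s) (fun _ => y s)
    simpa only [Finset.prod_const, Finset.card_univ] using this
  calc _ ≤ ∫ W, |∏ s, (W : Matrix (Fin n) (Fin n) ℝ) (x s) (y s)| ∂μ :=
        abs_integral_le_integral_abs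
    _ ≤ ∫ W, ∑ s, (W : Matrix (Fin n) (Fin n) ℝ) (x s) (y s) ^ Fintype.card ι ∂μ :=
        integral_mono (integrable_prod_entries μ x y).abs
          (integrable_finsetSum _ fun s _ => hint s) fun W => prod_le_sum_pow hN _
    _ = ∑ s, ∫ W, (W : Matrix (Fin n) (Fin n) ℝ) (x s) (y s) ^ Fintype.card ι ∂μ :=
        integral_finsetSum _ fun s _ => hint s
    _ ≤ ∑ _s : ι, (Real.sqrt n)⁻¹ ^ Fintype.card ι * khC (Fintype.card ι) :=
        Finset.sum_le_sum fun s _ => moment_entry μ hn hN _ _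
    _ = _ := by simp

end Haar

/-! ### Assembling the bound -/

/-- If a number `e` bounded by `B` is fixed by multiplication by every value of a `±1`-valued
character `φ` of the group of signs, then it is at most `B` times the average of `φ`: either `φ` is
trivial and the average is `1`, or both `e` and the average vanish. -/
theorem le_mul_sum_character {n : ℕ} (φ : (Fin n → ℤˣ) → ℝ)
    (hmul : ∀ δ ε, φ (δ * ε) = φ δ * φ ε) (hval : ∀ ε, φ ε = 1 ∨ φ ε = -1) {e B : ℝ}
    (he : ∀ ε, e = φ ε * e) (hB : |e| ≤ B) : 2 ^ n * e ≤ B * ∑ ε, φ ε := by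
  by_cases h : ∀ ε, φ ε = 1
  · simp only [h, Finset.sum_const, Finset.card_univ, nsmul_eq_mul, mul_one]
    have : (Fintype.card (Fin n → ℤˣ) : ℝ) = 2 ^ n := by simp
    rw [this, mul_comm]
    gcongr
    exact (le_abs_self e).trans hB
  · push Not at h
    obtain ⟨δ, hδ⟩ := h
    have hδ' : φ δ = -1 := (hval δ).resolve_left hδ
    have e0 : e = 0 := by
      have := he δ
      rw [hδ'] at this
      linarith
    have s0 : ∑ ε, φ ε = 0 := by
      have h1 := Equiv.sum_comp (Equiv.mulLeft δ) φ
      simp only [Equiv.coe_mulLeft, hmul, hδ', ← Finset.mul_sum] at h1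
      linarith
    simp [e0, s0]

/-- The moment bound for the sum over paths, with the factors `τ i` and `τ j` removed. -/
theorem path_sum_moment {n : ℕ} (hn : 1 ≤ n) (k m : ℕ) (hm : 0 < m) (hme : Even m)
    (μ : Measure (Matrix.orthogonalGroup (Fin n) ℝ)) [μ.IsMulLeftInvariant]
    [IsProbabilityMeasure μ] (τ : Fin n → ℝ) (hτ : ∀ i, 0 ≤ τ i) (i j : Fin n) :
    ∫ W, (∑ p : Fin k → Fin n, (∏ l, τ (p l)) *
          ∏ l : Fin (k + 1), (W : Matrix (Fin n) (Fin n) ℝ)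
            ((Fin.cons i p : Fin (k + 1) → Fin n) l)
            ((Fin.snoc p j : Fin (k + 1) → Fin n) l)) ^ m ∂μ
      ≤ ((m * (k + 1) : ℕ) : ℝ) * ((Real.sqrt n)⁻¹ ^ (m * (k + 1)) * khC (m * (k + 1)))
          * (khC (k * m) * Real.sqrt (∑ c, τ c ^ 2) ^ (k * m)) := by
  set B : ℝ := ((m * (k + 1) : ℕ) : ℝ) * ((Real.sqrt n)⁻¹ ^ (m * (k + 1)) * khC (m * (k + 1)))
    with hBdef
  have hB0 : 0 ≤ B := by
    have := one_le_khC (m * (k + 1))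
    positivity
  let x : (Fin m → Fin k → Fin n) → Fin m × Fin (k + 1) → Fin n :=
    fun q s => (Fin.cons i (q s.1) : Fin (k + 1) → Fin n) s.2
  let y : (Fin m → Fin k → Fin n) → Fin m × Fin (k + 1) → Fin n :=
    fun q s => (Fin.snoc (q s.1) j : Fin (k + 1) → Fin n) s.2
  let e : (Fin m → Fin k → Fin n) → ℝ := fun q =>
    ∫ W, ∏ s, (W : Matrix (Fin n) (Fin n) ℝ) (x q s) (y q s) ∂μ
  let φ : (Fin m → Fin k → Fin n) → (Fin n → ℤˣ) → ℝ := fun q ε =>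
    ∏ s, ∏ l, ((ε (q s l) : ℤ) : ℝ)
  have hexp : ∫ W, (∑ p : Fin k → Fin n, (∏ l, τ (p l)) *
          ∏ l : Fin (k + 1), (W : Matrix (Fin n) (Fin n) ℝ)
            ((Fin.cons i p : Fin (k + 1) → Fin n) l)
            ((Fin.snoc p j : Fin (k + 1) → Fin n) l)) ^ m ∂μ
      = ∑ q, (∏ s, ∏ l, τ (q s l)) * e q := by
    simp only [e, ← integral_const_mul]
    rw [← integral_finsetSum _ fun q _ => (integrable_prod_entries μ (x q) (y q)).const_mul _]
    refine integral_congr_ae (Filter.Eventually.of_forall fun W => ?_)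
    simp only [Fintype.sum_pow, Finset.prod_mul_distrib, Fintype.prod_prod_type, x, y]
  have hcard : Fintype.card (Fin m × Fin (k + 1)) = m * (k + 1) := by simp
  have hle : ∀ q, |e q| ≤ B := by
    intro q
    have : Nonempty (Fin m × Fin (k + 1)) := ⟨(⟨0, hm⟩, 0)⟩
    have := abs_integral_prod_entries_le μ hn (ι := Fin m × Fin (k + 1))
      (by rw [hcard]; exact hme.mul_right _) (x q) (y q)
    rwa [hcard] at this
  have hinv : ∀ q ε, e q = φ q ε * e q := by
    intro q ε
    simp only [e, φ]
    rw [← integral_const_mul]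
    conv_lhs => rw [← integral_mul_left_eq_self _ (signMat ε)]
    refine integral_congr_ae (Filter.Eventually.of_forall fun W => ?_)
    simp only [signMat_mul_apply, Finset.prod_mul_distrib]
    congr 1
    rw [Fintype.prod_prod_type]
    simp only [x, Fin.prod_univ_succ, Fin.cons_zero, Fin.cons_succ, Finset.prod_mul_distrib,
      Finset.prod_const, Finset.card_univ, Fintype.card_fin]
    -- The signs of the fixed starting row occur `m` times, an even number.
    have h1 : (((ε i : ℤ) : ℝ)) ^ m = 1 := by
      rcases Int.units_eq_one_or (ε i) with h | h <;> simp [h, hme.neg_one_pow]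
    rw [h1, one_mul]
  have hchar : ∀ q, 2 ^ n * e q ≤ B * ∑ ε, φ q ε := by
    intro q
    refine le_mul_sum_character (φ q) ?_ ?_ (hinv q) (hle q)
    · intro δ ε
      simp [φ, Finset.prod_mul_distrib]
    · intro ε
      have h1 : φ q ε = (((∏ s, ∏ l, ε (q s l) : ℤˣ) : ℤ) : ℝ) := by
        simp [φ, Units.coe_prod]
      rw [h1]
      rcases Int.units_eq_one_or (∏ s, ∏ l, ε (q s l)) with h | h <;> simp [h]
  have hkh := khintchine (N := k * m) (hme.mul_left k) τ
  have hcollapse : ∑ q, (∏ s, ∏ l, τ (q s l)) * ∑ ε, φ q ε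
      = ∑ ε : Fin n → ℤˣ, (∑ c, ((ε c : ℤ) : ℝ) * τ c) ^ (k * m) := by
    simp only [Finset.mul_sum]
    rw [Finset.sum_comm]
    refine Finset.sum_congr rfl fun ε _ => ?_
    rw [pow_mul, Fintype.sum_pow, Fintype.sum_pow]
    refine Finset.sum_congr rfl fun q _ => ?_
    simp only [φ, Finset.prod_mul_distrib]
    ring
  rw [hexp]
  refine le_of_mul_le_mul_left (a := (2 : ℝ) ^ n) ?_ (by positivity)
  calc (2 : ℝ) ^ n * ∑ q, (∏ s, ∏ l, τ (q s l)) * e q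
      = ∑ q, (∏ s, ∏ l, τ (q s l)) * (2 ^ n * e q) := by
        rw [Finset.mul_sum]
        exact Finset.sum_congr rfl fun q _ => by ring
    _ ≤ ∑ q, (∏ s, ∏ l, τ (q s l)) * (B * ∑ ε, φ q ε) := by
        refine Finset.sum_le_sum fun q _ => mul_le_mul_of_nonneg_left (hchar q) ?_
        exact Finset.prod_nonneg fun s _ => Finset.prod_nonneg fun l _ => hτ _
    _ = B * ∑ q, (∏ s, ∏ l, τ (q s l)) * ∑ ε, φ q ε := by
        rw [Finset.mul_sum]
        exact Finset.sum_congr rfl fun q _ => by ring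
    _ ≤ B * (2 ^ n * (khC (k * m) * Real.sqrt (∑ c, τ c ^ 2) ^ (k * m))) := by
        rw [hcollapse]
        gcongr
    _ = _ := by ring

theorem hsNorm_diagonal {n : ℕ} (τ : Fin n → ℝ) :
    hsNorm (Matrix.diagonal τ) = Real.sqrt (∑ c, τ c ^ 2) := by
  unfold hsNorm
  congr 1
  refine Finset.sum_congr rfl fun c _ => ?_
  rw [Finset.sum_eq_single c]
  · simp
  · intro d _ hd
    simp [Matrix.diagonal_apply_ne' _ hd]
  · simp

/-- Moment bound for a single entry of `(T W)ᵏ T`, with `W` Haar-distributed on `O(n)`. -/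
theorem entry_moment_bound (k m : ℕ) (hk : 1 ≤ k) (hm : 0 < m) (hme : Even m) :
    ∃ C : ℝ, 0 < C ∧ ∀ n : ℕ, 1 ≤ n → ∀ τ : Fin n → ℝ, (∀ i, 0 ≤ τ i) →
      ∀ μ : Measure (Matrix.orthogonalGroup (Fin n) ℝ),
        μ.IsHaarMeasure → IsProbabilityMeasure μ →
      ∀ i j : Fin n,
        (∫ W, (((Matrix.diagonal τ * (W : Matrix (Fin n) (Fin n) ℝ)) ^ k *
            Matrix.diagonal τ) i j) ^ m ∂μ)
          ≤ C * τ i ^ m * τ j ^ m * hsNorm (Matrix.diagonal τ) ^ (m * (k - 1)) *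
              (n : ℝ) ^ (-((k * m : ℕ) : ℝ) / 2) := by
  obtain ⟨k, rfl⟩ : ∃ k', k = k' + 1 := ⟨k - 1, by omega⟩
  have hc1 := one_le_khC (m * (k + 1))
  have hc2 := one_le_khC (k * m)
  refine ⟨((m * (k + 1) : ℕ) : ℝ) * khC (m * (k + 1)) * khC (k * m), by positivity, ?_⟩
  intro n hn τ hτ μ hμ hμp i j
  have hn0 : (0 : ℝ) ≤ n := by positivity
  have hrpow : (n : ℝ) ^ (-(((k + 1) * m : ℕ) : ℝ) / 2) = (Real.sqrt n)⁻¹ ^ (m * (k + 1)) := by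
    rw [Real.sqrt_eq_rpow, ← Real.rpow_neg hn0, ← Real.rpow_natCast, ← Real.rpow_mul hn0]
    congr 1
    push_cast
    ring
  rw [hrpow, hsNorm_diagonal]
  simp only [entry_eq_sum_paths, mul_pow (τ i * τ j)]
  rw [integral_const_mul, mul_pow, Nat.add_sub_cancel, mul_comm m k]
  have h := path_sum_moment hn k m hm hme μ τ hτ i j
  have hi := pow_nonneg (hτ i) m
  have hj := pow_nonneg (hτ j) m
  refine (mul_le_mul_of_nonneg_left h (mul_nonneg hi hj)).trans (le_of_eq ?_)
  ring
end

section
/- Let n ≥ 1, let T = diag(τ₁, …, τₙ) be a fixed n×n diagonal matrix with non-negative entries, let k ≥ 1 be an integer, and let W be a random n×n orthogonal matrix distributed according to the Haar probability measure on O(n). Fix i ∈ {1, …, n}, and for s ≥ 0 let T(i,s) denote the diagonal matrix whose i-th diagonal entry equals s and whose other diagonal entries equal the corresponding entries of T. Then there exists a constant c_k > 0 depending only on k such that the Lebesgue measure of the set { s ∈ [τᵢ/2, τᵢ] : E[ ((T(i,s) W)^k T(i,s))_{ii}² ] ≥ c_k · n^{-k} · τᵢ^{2k+2} } is at least τᵢ/4.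 -/
/-!
For fixed `W` the entry `((T(i,s) W)ᵏ T(i,s))ᵢᵢ` is a polynomial in `s` of degree at most `k + 1`
whose coefficient at `s ^ (k + 1)` is `Wᵢᵢ ^ k`: the only path of length `k` from `i` to `i` that
picks up `k + 1` factors `s` is the constant one. Hence the second moment is a polynomial in `s` of
degree `d = 2 * k + 2` with leading coefficient `E[Wᵢᵢ ^ (2 * k)]`. By Jensen's inequality this is
at least `E[Wᵢᵢ ^ 2] ^ k = n ^ (-k)`, where `E[Wᵢᵢ ^ 2] = 1 / n` because the squares of the entries
in a column sum to `1` and are exchangeable under left multiplication by permutation matrices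
(`integral_entry_sq`, `le_integral_entry_pow`).

A real polynomial of degree `d` and leading coefficient at least `a` is at least `a * r ^ d` in
absolute value at every real point whose distance to the real part of each of its complex roots is
at least `r`. The excluded points have measure at most `2 * d * r`; with `r = τᵢ / (8 * d)` this
leaves measure `τᵢ / 4` in `[τᵢ / 2, τᵢ]` (`volume_large_values`), and `c = (1 / (8 * d)) ^ d`.
-/

open MeasureTheory ProbabilityTheory

/-! ### Topology and measurability of the orthogonal group -/

instance matrixBorelSpace (n : ℕ) : BorelSpace (Matrix (Fin n) (Fin n) ℝ) :=
  inferInstanceAs (BorelSpace (Fin n → Fin n → ℝ))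

instance orthogonalCompactSpace (n : ℕ) :
    CompactSpace (Matrix.orthogonalGroup (Fin n) ℝ) := by
  refine (isCompact_iff_compactSpace
    (s := (Matrix.orthogonalGroup (Fin n) ℝ : Set (Matrix (Fin n) (Fin n) ℝ)))).1 ?_
  have hK : IsCompact (Set.pi Set.univ fun _ : Fin n => Set.pi Set.univ fun _ : Fin n =>
      Set.Icc (-1 : ℝ) 1) :=
    isCompact_univ_pi fun _ => isCompact_univ_pi fun _ => isCompact_Icc
  refine IsCompact.of_isClosed_subset hK ?_ ?_
  · have h : (Matrix.orthogonalGroup (Fin n) ℝ : Set (Matrix (Fin n) (Fin n) ℝ)) =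
        {A | A * A.transpose = 1} := by
      ext A
      exact Matrix.mem_orthogonalGroup_iff _ _
    have hc : Continuous fun A : Matrix (Fin n) (Fin n) ℝ => A * A.transpose := by fun_prop
    have h2 : IsClosed {A : Matrix (Fin n) (Fin n) ℝ | A * A.transpose = 1} :=
      isClosed_eq hc continuous_const
    rw [← h] at h2
    exact h2
  · intro A hA a _ b _
    have hA' : A * A.transpose = 1 := (Matrix.mem_orthogonalGroup_iff _ _).1 hA
    have h1 : ∑ j, A a j * A a j = 1 := by
      have := congrFun (congrFun hA' a) a
      simpa [Matrix.mul_apply] using this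
    have h2 : A a b * A a b ≤ 1 := by
      rw [← h1]
      exact Finset.single_le_sum (f := fun j => A a j * A a j)
        (fun j _ => mul_self_nonneg _) (Finset.mem_univ b)
    exact abs_le.1 (abs_le_one_iff_mul_self_le_one.2 h2)

lemma integrable_of_continuous {n : ℕ} {μ : Measure (Matrix.orthogonalGroup (Fin n) ℝ)}
    [IsProbabilityMeasure μ] {f : Matrix.orthogonalGroup (Fin n) ℝ → ℝ} (hf : Continuous f) :
    Integrable f μ :=
  hf.integrable_of_hasCompactSupport (HasCompactSupport.of_compactSpace f)

lemma continuous_entry {n : ℕ} (a b : Fin n) :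
    Continuous fun W : Matrix.orthogonalGroup (Fin n) ℝ => (W : Matrix (Fin n) (Fin n) ℝ) a b :=
  continuous_subtype_val.matrix_elem a b

lemma continuous_entry_sq {n : ℕ} (a b : Fin n) :
    Continuous fun W : Matrix.orthogonalGroup (Fin n) ℝ =>
      (W : Matrix (Fin n) (Fin n) ℝ) a b ^ 2 :=
  (continuous_entry a b).pow 2

/-! ### Moments of a diagonal entry -/

/-- All entries of a column have the same second moment. -/
lemma integral_entry_sq_swap {n : ℕ} (μ : Measure (Matrix.orthogonalGroup (Fin n) ℝ))
    [μ.IsHaarMeasure] (i j : Fin n) :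
    ∫ W, ((W : Matrix (Fin n) (Fin n) ℝ) j i) ^ 2 ∂μ =
      ∫ W, ((W : Matrix (Fin n) (Fin n) ℝ) i i) ^ 2 ∂μ := by
  have hP : (Equiv.swap i j).permMatrix ℝ ∈ Matrix.orthogonalGroup (Fin n) ℝ := by
    rw [Matrix.mem_orthogonalGroup_iff, Matrix.transpose_permMatrix, ← Matrix.permMatrix_mul]
    simp
  rw [← integral_mul_left_eq_self (μ := μ)
    (fun W : Matrix.orthogonalGroup (Fin n) ℝ => ((W : Matrix (Fin n) (Fin n) ℝ) i i) ^ 2)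
    ⟨_, hP⟩]
  refine integral_congr_ae (Filter.Eventually.of_forall fun W => ?_)
  simp [Equiv.Perm.permMatrix, PEquiv.toMatrix_toPEquiv_mul]

lemma integral_entry_sq {n : ℕ} (μ : Measure (Matrix.orthogonalGroup (Fin n) ℝ))
    [μ.IsHaarMeasure] [IsProbabilityMeasure μ] (i : Fin n) :
    ∫ W, ((W : Matrix (Fin n) (Fin n) ℝ) i i) ^ 2 ∂μ = (n : ℝ)⁻¹ := by
  have h : ∑ j, ∫ W, ((W : Matrix (Fin n) (Fin n) ℝ) j i) ^ 2 ∂μ = 1 := by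
    rw [← integral_finsetSum _ fun j _ =>
      integrable_of_continuous (continuous_entry_sq j i)]
    have : ∀ W : Matrix.orthogonalGroup (Fin n) ℝ,
        ∑ j, ((W : Matrix (Fin n) (Fin n) ℝ) j i) ^ 2 = 1 := by
      intro W
      have := congrFun (congrFun ((Matrix.mem_orthogonalGroup_iff' _ _).1 W.2) i) i
      simpa [Matrix.mul_apply, sq] using this
    simp [this]
  simp only [integral_entry_sq_swap, Finset.sum_const, Finset.card_univ, Fintype.card_fin,
    nsmul_eq_mul] at h
  exact eq_inv_of_mul_eq_one_right h

lemma le_integral_entry_pow {n : ℕ} (μ : Measure (Matrix.orthogonalGroup (Fin n) ℝ))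
    [μ.IsHaarMeasure] [IsProbabilityMeasure μ] (i : Fin n) (k : ℕ) :
    ((n : ℝ) ^ k)⁻¹ ≤ ∫ W, (((W : Matrix (Fin n) (Fin n) ℝ) i i) ^ k) ^ 2 ∂μ := by
  have h := (convexOn_pow (𝕜 := ℝ) k).map_integral_le (μ := μ)
    (f := fun W : Matrix.orthogonalGroup (Fin n) ℝ => ((W : Matrix (Fin n) (Fin n) ℝ) i i) ^ 2)
    (continuous_pow k).continuousOn isClosed_Ici
    (Filter.Eventually.of_forall fun W => Set.mem_Ici.2 (sq_nonneg _))
    (integrable_of_continuous (continuous_entry_sq i i))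
    (integrable_of_continuous ((continuous_pow k).comp (continuous_entry_sq i i)))
  rw [integral_entry_sq] at h
  simpa only [inv_pow, ← pow_mul, mul_comm] using h

/-! ### The matrix entry as a polynomial in `s` -/

open Polynomial in
/-- The matrix `T(i,s)` with the variable `X` in place of `s`. -/
noncomputable def polyDiag {n : ℕ} (τ : Fin n → ℝ) (i : Fin n) : Matrix (Fin n) (Fin n) ℝ[X] :=
  Matrix.diagonal (Function.update (fun j => C (τ j)) i X)

open Polynomial in
/-- The matrix `(T(i,s) A)ᵏ T(i,s)` with the variable `X` in place of `s`. -/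
noncomputable def polyMat {n : ℕ} (τ : Fin n → ℝ) (i : Fin n) (A : Matrix (Fin n) (Fin n) ℝ)
    (k : ℕ) : Matrix (Fin n) (Fin n) ℝ[X] :=
  (polyDiag τ i * A.map C) ^ k * polyDiag τ i

open Polynomial in
lemma polyMat_succ_apply {n : ℕ} (τ : Fin n → ℝ) (i : Fin n) (A : Matrix (Fin n) (Fin n) ℝ)
    (k : ℕ) (a b : Fin n) :
    polyMat τ i A (k + 1) a b =
      (∑ c, polyMat τ i A k a c * C (A c b)) *
        Function.update (fun j => C (τ j)) i X b := by
  have h : polyMat τ i A (k + 1) = polyMat τ i A k * A.map C * polyDiag τ i := by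
    simp only [polyMat, pow_succ, mul_assoc]
  rw [h, polyDiag, Matrix.mul_diagonal, Matrix.mul_apply]
  simp [Matrix.map_apply]

open Polynomial in
lemma polyMat_zero_apply {n : ℕ} (τ : Fin n → ℝ) (i : Fin n) (A : Matrix (Fin n) (Fin n) ℝ)
    (b : Fin n) : polyMat τ i A 0 i b = if b = i then X else 0 := by
  by_cases hb : b = i
  · subst hb
    simp [polyMat, polyDiag]
  · simp [polyMat, polyDiag, Matrix.one_apply_ne (Ne.symm hb), hb]

open Polynomial in
lemma eval_polyMat {n : ℕ} (τ : Fin n → ℝ) (i : Fin n) (A : Matrix (Fin n) (Fin n) ℝ)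
    (k : ℕ) (s : ℝ) (a b : Fin n) :
    (polyMat τ i A k a b).eval s =
      ((Matrix.diagonal (Function.update τ i s) * A) ^ k *
        Matrix.diagonal (Function.update τ i s)) a b := by
  have hD : (polyDiag τ i).map (evalRingHom s) = Matrix.diagonal (Function.update τ i s) := by
    rw [polyDiag, Matrix.diagonal_map (map_zero _)]
    congr 1
    ext j
    by_cases hj : j = i
    · subst hj
      simp
    · simp [hj]
  have hA : (A.map C).map (evalRingHom s) = A := by
    ext
    simp
  have h : (polyMat τ i A k).map (evalRingHom s) =
      (Matrix.diagonal (Function.update τ i s) * A) ^ k *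
        Matrix.diagonal (Function.update τ i s) := by
    rw [polyMat, Matrix.map_mul, Matrix.map_pow, Matrix.map_mul, hD, hA]
  rw [← h]
  simp

lemma coeff_polyMat_of_lt {n : ℕ} (τ : Fin n → ℝ) (i : Fin n) (A : Matrix (Fin n) (Fin n) ℝ)
    (k : ℕ) : ∀ (b : Fin n) (m : ℕ), k + 1 < m → (polyMat τ i A k i b).coeff m = 0 := by
  induction k with
  | zero =>
    intro b m hm
    rw [polyMat_zero_apply]
    split_ifs
    · exact Polynomial.coeff_X_of_ne_one (by omega)
    · simp
  | succ k ih =>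
    intro b m hm
    obtain ⟨m, rfl⟩ : ∃ m', m = m' + 1 := ⟨m - 1, by omega⟩
    rw [polyMat_succ_apply]
    by_cases hb : b = i
    · subst hb
      simp [Polynomial.finsetSum_coeff, ih _ m (by omega)]
    · simp [hb, Polynomial.finsetSum_coeff, ih _ (m + 1) (by omega)]

/-- In row `i` only the diagonal entry reaches degree `k + 1`. -/
lemma coeff_polyMat_top {n : ℕ} (τ : Fin n → ℝ) (i : Fin n) (A : Matrix (Fin n) (Fin n) ℝ)
    (k : ℕ) : ∀ b : Fin n,
      (polyMat τ i A k i b).coeff (k + 1) = if b = i then A i i ^ k else 0 := by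
  induction k with
  | zero =>
    intro b
    rw [polyMat_zero_apply]
    split_ifs <;> simp
  | succ k ih =>
    intro b
    rw [polyMat_succ_apply]
    by_cases hb : b = i
    · subst hb
      simp [Polynomial.finsetSum_coeff, ih, pow_succ]
    · simp [hb, Polynomial.finsetSum_coeff, coeff_polyMat_of_lt τ i A k _ (k + 1 + 1) (by omega)]

lemma continuous_coeff_mul {Ω : Type*} [TopologicalSpace Ω] {p q : Ω → Polynomial ℝ}
    (hp : ∀ m, Continuous fun W => (p W).coeff m) (hq : ∀ m, Continuous fun W => (q W).coeff m)
    (m : ℕ) : Continuous fun W => (p W * q W).coeff m := by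
  simp only [Polynomial.coeff_mul]
  exact continuous_finsetSum _ fun x _ => (hp _).mul (hq _)

lemma continuous_coeff_polyMat {n : ℕ} (τ : Fin n → ℝ) (i : Fin n) (k : ℕ) :
    ∀ (b : Fin n) (m : ℕ), Continuous fun W : Matrix.orthogonalGroup (Fin n) ℝ =>
      (polyMat τ i (W : Matrix (Fin n) (Fin n) ℝ) k i b).coeff m := by
  induction k with
  | zero =>
    intro b m
    simp only [polyMat_zero_apply]
    exact continuous_const
  | succ k ih =>
    intro b m
    simp only [polyMat_succ_apply]
    refine continuous_coeff_mul (fun m => ?_) (fun m => continuous_const) m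
    simp only [Polynomial.finsetSum_coeff, Polynomial.coeff_mul_C]
    exact continuous_finsetSum _ fun c _ => (ih c m).mul (continuous_entry c b)

open Polynomial in
/-- The second moment is a polynomial in `s` with leading coefficient at least `n ^ (-k)`. -/
lemma exists_moment_polynomial {n : ℕ} (hn : 1 ≤ n) (τ : Fin n → ℝ) (i : Fin n) (k : ℕ)
    (μ : Measure (Matrix.orthogonalGroup (Fin n) ℝ)) [μ.IsHaarMeasure]
    [IsProbabilityMeasure μ] :
    ∃ F : ℝ[X], F.natDegree = 2 * k + 2 ∧ ((n : ℝ) ^ k)⁻¹ ≤ F.leadingCoeff ∧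
      ∀ s, F.eval s = ∫ W, (((Matrix.diagonal (Function.update τ i s) *
                  (W : Matrix (Fin n) (Fin n) ℝ)) ^ k *
                  Matrix.diagonal (Function.update τ i s)) i i) ^ 2 ∂μ := by
  set p : Matrix.orthogonalGroup (Fin n) ℝ → ℝ[X] :=
    fun W => polyMat τ i (W : Matrix (Fin n) (Fin n) ℝ) k i i with hp
  have hdeg : ∀ W, (p W).natDegree ≤ k + 1 := fun W =>
    natDegree_le_iff_coeff_eq_zero.2 fun m hm => coeff_polyMat_of_lt τ i _ k i m hm
  have hdeg2 : ∀ W, (p W ^ 2).natDegree < 2 * k + 3 := fun W => by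
    have := natDegree_pow_le_of_le 2 (hdeg W)
    omega
  have hcont : ∀ m, Continuous fun W => (p W ^ 2).coeff m := fun m => by
    simp only [sq]
    exact continuous_coeff_mul (continuous_coeff_polyMat τ i k i)
      (continuous_coeff_polyMat τ i k i) m
  have htop : ∀ W, (p W ^ 2).coeff (2 * k + 2) =
      ((W : Matrix (Fin n) (Fin n) ℝ) i i ^ k) ^ 2 := fun W => by
    have := coeff_pow_of_natDegree_le (m := 2) (hdeg W)
    rw [show 2 * k + 2 = 2 * (k + 1) by ring, this, hp]
    simp [coeff_polyMat_top]
  set F : ℝ[X] := ∑ m ∈ Finset.range (2 * k + 3),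
    monomial m (∫ W, (p W ^ 2).coeff m ∂μ) with hF
  have hcoeff : ∀ m, F.coeff m =
      if m < 2 * k + 3 then ∫ W, (p W ^ 2).coeff m ∂μ else 0 := fun m => by
    simp [hF, finsetSum_coeff, coeff_monomial]
  have hlead : ((n : ℝ) ^ k)⁻¹ ≤ F.coeff (2 * k + 2) := by
    rw [hcoeff, if_pos (by omega)]
    simp only [htop]
    exact le_integral_entry_pow μ i k
  have hpos : 0 < F.coeff (2 * k + 2) := by
    have : (0 : ℝ) < n := by exact_mod_cast hn
    exact lt_of_lt_of_le (by positivity) hlead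
  have hnat : F.natDegree = 2 * k + 2 := by
    refine le_antisymm (natDegree_le_iff_coeff_eq_zero.2 fun m hm => ?_)
      (le_natDegree_of_ne_zero hpos.ne')
    rw [hcoeff, if_neg (by omega)]
  refine ⟨F, hnat, ?_, fun s => ?_⟩
  · rwa [leadingCoeff, hnat]
  · simp only [← eval_polyMat, ← eval_pow]
    change _ = ∫ W, eval s (p W ^ 2) ∂μ
    simp only [fun W => eval_eq_sum_range' (hdeg2 W) s]
    rw [integral_finsetSum _ fun m _ => (integrable_of_continuous (hcont m)).mul_const _]
    simp [hF, eval_finsetSum, integral_mul_const]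

/-! ### Large values of real polynomials -/

open Polynomial in
/-- A real polynomial is large at real points far from the real parts of its complex roots. -/
lemma le_abs_eval (F : ℝ[X]) {a r s : ℝ} (ha : a ≤ F.leadingCoeff) (ha0 : 0 ≤ a) (hr : 0 ≤ r)
    (hs : ∀ z ∈ (F.map (algebraMap ℝ ℂ)).roots, r ≤ |s - z.re|) :
    a * r ^ F.natDegree ≤ |F.eval s| := by
  set G : ℂ[X] := F.map (algebraMap ℝ ℂ) with hG
  have hsp : G.Splits := IsAlgClosed.splits G
  have h1 := hsp.eval_eq_prod_roots (s : ℂ)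
  have h2 : G.eval (s : ℂ) = ((F.eval s : ℝ) : ℂ) := by
    have := eval_map_algebraMap (B := ℂ) F (s : ℂ)
    rw [hG, this]
    exact aeval_algebraMap_apply ℂ s F
  have hcard : Multiset.card G.roots = F.natDegree := by
    rw [← hsp.natDegree_eq_card_roots, hG, natDegree_map]
  have hlc : G.leadingCoeff = ((F.leadingCoeff : ℝ) : ℂ) := by
    rw [hG, leadingCoeff_map]
    rfl
  have key : ∀ R : Multiset ℂ, (∀ z ∈ R, r ≤ |s - z.re|) →
      r ^ Multiset.card R ≤ ‖(R.map fun z => (s : ℂ) - z).prod‖ := by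
    intro R
    induction R using Multiset.induction_on with
    | empty => simp
    | cons z R ih =>
      intro h
      rw [Multiset.card_cons, Multiset.map_cons, Multiset.prod_cons, norm_mul, pow_succ']
      have h3 : r ≤ ‖(s : ℂ) - z‖ := by
        refine (h z (Multiset.mem_cons_self z R)).trans ?_
        simpa using Complex.abs_re_le_norm ((s : ℂ) - z)
      exact mul_le_mul h3 (ih fun w hw => h w (Multiset.mem_cons_of_mem hw))
        (pow_nonneg hr _) (norm_nonneg _)
  have h4 : |F.eval s| = F.leadingCoeff * ‖(G.roots.map fun z => (s : ℂ) - z).prod‖ := by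
    rw [← Real.norm_eq_abs, ← Complex.norm_real, ← h2, h1, norm_mul, hlc, Complex.norm_real, Real.norm_eq_abs,
      abs_of_nonneg (ha0.trans ha)]
  rw [h4, ← hcard]
  exact mul_le_mul ha (key _ hs) (pow_nonneg hr _) (ha0.trans ha)

open Polynomial in
lemma volume_large_values (F : ℝ[X]) {a t : ℝ} (ha : a ≤ F.leadingCoeff) (ha0 : 0 ≤ a)
    (ht : 0 ≤ t) (hd : 0 < F.natDegree) :
    ENNReal.ofReal (t / 4) ≤ volume {s ∈ Set.Icc (t / 2) t |
      a * (t / (8 * F.natDegree)) ^ F.natDegree ≤ |F.eval s|} := by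
  classical
  set d := F.natDegree with hdd
  set r := t / (8 * d) with hr
  have hd' : (0 : ℝ) < d := by exact_mod_cast hd
  have hr0 : 0 ≤ r := by positivity
  set Z := (F.map (algebraMap ℝ ℂ)).roots.toFinset with hZ
  set B : Set ℝ := ⋃ z ∈ Z, Metric.ball z.re r with hB
  have hcard : Z.card ≤ d := by
    refine (Multiset.toFinset_card_le _).trans ((card_roots' _).trans ?_)
    rw [natDegree_map]
  have hBvol : volume B ≤ ENNReal.ofReal (t / 4) := by
    refine (measure_biUnion_finset_le Z _).trans ?_
    simp only [Real.volume_ball, Finset.sum_const, nsmul_eq_mul]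
    rw [← ENNReal.ofReal_natCast, ← ENNReal.ofReal_mul (by positivity)]
    refine ENNReal.ofReal_le_ofReal ?_
    calc (Z.card : ℝ) * (2 * r) ≤ d * (2 * r) := by gcongr
      _ = t / 4 := by
        rw [hr]
        field_simp
        ring
  have hsub : Set.Icc (t / 2) t \ B ⊆ {s ∈ Set.Icc (t / 2) t |
      a * r ^ d ≤ |F.eval s|} := by
    rintro s ⟨hs, hsB⟩
    refine ⟨hs, le_abs_eval F ha ha0 hr0 fun z hz => ?_⟩
    by_contra! hlt
    refine hsB (Set.mem_biUnion (x := z) (by simpa [hZ] using hz) ?_)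
    rwa [Metric.mem_ball, Real.dist_eq]
  calc ENNReal.ofReal (t / 4) = ENNReal.ofReal (t / 2) - ENNReal.ofReal (t / 4) := by
        rw [← ENNReal.ofReal_sub _ (by positivity)]
        congr 1
        ring
    _ ≤ volume (Set.Icc (t / 2) t) - volume B := by
        refine tsub_le_tsub (le_of_eq ?_) hBvol
        rw [Real.volume_Icc]
        congr 1
        ring
    _ ≤ volume (Set.Icc (t / 2) t \ B) := le_measure_sdiff
    _ ≤ _ := measure_mono hsub

/-! ### Conclusion -/

/-- Anticoncentration of the second moment of the `(i,i)` entry of `(T(i,s) W)ᵏ T(i,s)`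
as the `i`-th diagonal entry `s` of `T` varies over `[τᵢ/2, τᵢ]`. -/
theorem diagonal_entry_second_moment_lower (k : ℕ) (hk : 1 ≤ k) :
    ∃ c : ℝ, 0 < c ∧ ∀ n : ℕ, 1 ≤ n → ∀ τ : Fin n → ℝ, (∀ i, 0 ≤ τ i) →
      ∀ μ : Measure (Matrix.orthogonalGroup (Fin n) ℝ),
        μ.IsHaarMeasure → IsProbabilityMeasure μ →
      ∀ i : Fin n,
        ENNReal.ofReal (τ i / 4) ≤
          volume {s ∈ Set.Icc (τ i / 2) (τ i) |
            c * ((n : ℝ) ^ k)⁻¹ * τ i ^ (2 * k + 2) ≤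
              ∫ W, (((Matrix.diagonal (Function.update τ i s) *
                  (W : Matrix (Fin n) (Fin n) ℝ)) ^ k *
                  Matrix.diagonal (Function.update τ i s)) i i) ^ 2 ∂μ} := by
  refine ⟨(1 / (8 * ((2 * k + 2 : ℕ) : ℝ))) ^ (2 * k + 2), by positivity, ?_⟩
  intro n hn τ hτ μ hμ hμ' i
  obtain ⟨F, hdeg, hlead, heval⟩ := exists_moment_polynomial hn τ i k μ
  refine (volume_large_values F hlead (by positivity) (hτ i) (by omega)).trans
    (measure_mono ?_)
  rintro s ⟨hs, h⟩
  refine ⟨hs, ?_⟩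
  have hnonneg : 0 ≤ F.eval s := by
    rw [heval]
    exact integral_nonneg fun W => sq_nonneg _
  rw [abs_of_nonneg hnonneg, hdeg, heval] at h
  refine le_trans (le_of_eq ?_) h
  rw [div_eq_mul_one_div (τ i), mul_pow]
  ring
end

section
/- Let n ≥ 1 and let N be an even positive integer. Let τ₁, …, τₙ be non-negative reals, and let Ω ⊆ {1, …, n}^N be the set of index vectors α = (α₁, …, α_N) such that for every h ∈ {1, …, n} the number of indices ℓ with α_ℓ = h is even. Then there exists a constant C_N > 0 depending only on N such that Σ_{α ∈ Ω} ∏_{ℓ=1}^N τ_{α_ℓ} ≤ C_N · ( Σ_{h=1}^n τ_h² )^{N/2}. -/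
/-!
An index vector `α` with all multiplicities even factors through a pairing of its positions: splitting
each fibre of `α` into pairs gives a bijection `e : Fin N ≃ Fin (N / 2) × Fin 2` and a labelling
`β : Fin (N / 2) → Fin n` of the pairs with `α ℓ = β (e ℓ).1` (`exists_pairing`). Since `(e, β)`
determines `α`, the sum over `α` is at most the sum over all pairs `(e, β)`. For each fixed `e`, the sum
over `β` of `∏ j, τ (β j) ^ 2` is `(∑ h, τ h ^ 2) ^ (N / 2)`, so the number of bijections `e`, which
depends only on `N`, serves as the constant.
-/

/-- A function on `Fin N` whose fibres all have even size is constant on the blocks of some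
partition of `Fin N` into pairs. -/
lemma exists_pairing {N n : ℕ} (α : Fin N → Fin n)
    (hα : ∀ h : Fin n, Even ((Finset.univ.filter fun ℓ : Fin N => α ℓ = h)).card) :
    ∃ (e : Fin N ≃ Fin (N / 2) × Fin 2) (β : Fin (N / 2) → Fin n), ∀ ℓ, α ℓ = β (e ℓ).1 := by
  have hfib : ∀ h : Fin n, ∃ m : ℕ, Nonempty ({ℓ : Fin N // α ℓ = h} ≃ Fin m × Fin 2) := by
    intro h
    obtain ⟨m, hm⟩ := hα h
    refine ⟨m, ⟨Fintype.equivOfCardEq ?_⟩⟩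
    rw [Fintype.card_subtype, hm]
    simp
    ring
  choose m hm using hfib
  let f : ∀ h, {ℓ : Fin N // α ℓ = h} ≃ Fin (m h) × Fin 2 := fun h => (hm h).some
  let e₁ : Fin N ≃ (Σ h, Fin (m h)) × Fin 2 :=
    (Equiv.sigmaFiberEquiv α).symm.trans
      ((Equiv.sigmaCongrRight f).trans (Equiv.sigmaProdDistrib _ _).symm)
  have he₁ : ∀ ℓ, (e₁ ℓ).1.1 = α ℓ := fun ℓ => rfl
  have hcard : Fintype.card (Σ h, Fin (m h)) = Fintype.card (Fin (N / 2)) := by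
    have := Fintype.card_congr e₁
    rw [Fintype.card_prod, Fintype.card_fin, Fintype.card_fin] at this
    rw [Fintype.card_fin]
    omega
  let g := Fintype.equivOfCardEq hcard
  refine ⟨e₁.trans (g.prodCongr (Equiv.refl _)), fun j => (g.symm j).1, fun ℓ => ?_⟩
  simp [he₁]

/-- Summing `∏ℓ τ_{αℓ}` over all index vectors `α ∈ [n]^N` in which every index occurs an even
number of times is at most `C_N (∑ τ_h²)^{N/2}`. -/
theorem sum_even_multiplicities_bound (N : ℕ) (hN : 0 < N) (hNe : Even N) :
    ∃ C : ℝ, 0 < C ∧ ∀ n : ℕ, 1 ≤ n → ∀ τ : Fin n → ℝ, (∀ i, 0 ≤ τ i) →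
      ∑ α ∈ Finset.univ.filter
          (fun α : Fin N → Fin n =>
            ∀ h : Fin n, Even ((Finset.univ.filter fun ℓ : Fin N => α ℓ = h)).card),
        ∏ ℓ, τ (α ℓ) ≤ C * (∑ h, τ h ^ 2) ^ (N / 2) := by
  classical
  have hpos : 0 < Fintype.card (Fin N ≃ Fin (N / 2) × Fin 2) := by
    refine Fintype.card_pos_iff.mpr ⟨Fintype.equivOfCardEq ?_⟩
    obtain ⟨k, rfl⟩ := hNe
    simp
    omega
  refine ⟨Fintype.card (Fin N ≃ Fin (N / 2) × Fin 2), by exact_mod_cast hpos, ?_⟩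
  intro n _ τ hτ
  -- The vectors coming from a pairing `e` and a labelling `β` cover all vectors in the sum.
  let F : (Fin N ≃ Fin (N / 2) × Fin 2) × (Fin (N / 2) → Fin n) → (Fin N → Fin n) :=
    fun p ℓ => p.2 (p.1 ℓ).1
  have hnn : ∀ α : Fin N → Fin n, 0 ≤ ∏ ℓ, τ (α ℓ) :=
    fun α => Finset.prod_nonneg fun ℓ _ => hτ _
  calc _ ≤ ∑ α ∈ Finset.univ.image F, ∏ ℓ, τ (α ℓ) := by
        refine Finset.sum_le_sum_of_subset_of_nonneg ?_ fun α _ _ => hnn α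
        intro α hα
        obtain ⟨e, β, h⟩ := exists_pairing α (Finset.mem_filter.mp hα).2
        exact Finset.mem_image.mpr ⟨(e, β), Finset.mem_univ _, (funext h).symm⟩
    _ ≤ ∑ p, ∏ ℓ, τ (F p ℓ) :=
        Finset.sum_image_le_of_nonneg fun α _ => hnn α
    _ = ∑ _e : Fin N ≃ Fin (N / 2) × Fin 2, (∑ h, τ h ^ 2) ^ (N / 2) := by
        rw [Fintype.sum_prod_type]
        refine Finset.sum_congr rfl fun e _ => ?_
        rw [Fintype.sum_pow]
        refine Finset.sum_congr rfl fun β _ => ?_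
        rw [Equiv.prod_comp e (fun q => τ (β q.1)), Fintype.prod_prod_type]
        simp
    _ = _ := by simp
end

section
/- Let d ≥ 1 be an integer and let p be a real polynomial of degree d with positive leading coefficient a > 0. Let τ > 0 and suppose p(s) ≥ 0 for all s ∈ [τ/2, τ]. Then there exists a constant c_d > 0 depending only on d such that the Lebesgue measure of the set { s ∈ [τ/2, τ] : p(s) ≥ c_d · a · τ^d } is at least τ/4. -/
/-!
Over `ℂ` the polynomial factors as `p(s) = a ∏ (s - zᵢ)`, with `d` roots counted with multiplicity,
and `|s - zᵢ| ≥ |s - Re zᵢ|` for real `s`. Removing from `[τ/2, τ]` the intervals of radius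
`r = τ / (8d)` about the points `Re zᵢ` costs at most `d · 2r = τ/4` in measure, so a set of measure
at least `τ/4` remains. There `|p(s)| ≥ a r^d = (1/(8d))^d a τ^d`, and `p ≥ 0` removes the absolute
value. Hence `c = (1/(8d))^d` works.
-/

open MeasureTheory

lemma pow_card_le_norm_prod_sub (s r : ℝ) (hr : 0 ≤ r) (S : Multiset ℂ)
    (h : ∀ z ∈ S, r ≤ |s - z.re|) :
    r ^ S.card ≤ ‖(S.map (fun z => (s : ℂ) - z)).prod‖ := by
  induction S using Multiset.induction_on with
  | empty => simp
  | cons z S ih =>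
    rw [Multiset.card_cons, Multiset.map_cons, Multiset.prod_cons, norm_mul, pow_succ']
    have h1 : r ≤ ‖(s : ℂ) - z‖ := by
      refine (h z (Multiset.mem_cons_self z S)).trans ?_
      simpa using Complex.abs_re_le_norm ((s : ℂ) - z)
    exact mul_le_mul h1 (ih fun w hw => h w (Multiset.mem_cons_of_mem hw)) (by positivity)
      (by positivity)

/-- A real polynomial is at least `|a| r ^ d` in absolute value at every real point whose distance
to the real part of each complex root is at least `r`. -/
lemma leadingCoeff_mul_pow_le_abs_eval (p : Polynomial ℝ) (s r : ℝ) (hr : 0 ≤ r)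
    (h : ∀ z ∈ (p.map (algebraMap ℝ ℂ)).roots, r ≤ |s - z.re|) :
    |p.leadingCoeff| * r ^ p.natDegree ≤ |p.eval s| := by
  have hsp := IsAlgClosed.splits (p.map (algebraMap ℝ ℂ))
  have hcard : (p.map (algebraMap ℝ ℂ)).roots.card = p.natDegree := by
    rw [← hsp.natDegree_eq_card_roots, Polynomial.natDegree_map]
  have he : ((p.eval s : ℝ) : ℂ) = (p.map (algebraMap ℝ ℂ)).eval (s : ℂ) := by
    simpa using (Polynomial.eval_map_apply (f := algebraMap ℝ ℂ) (p := p) s).symm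
  rw [hsp.eval_eq_prod_roots] at he
  rw [← Real.norm_eq_abs (p.eval s), ← Complex.norm_real (p.eval s), he, norm_mul, Polynomial.leadingCoeff_map]
  have := pow_card_le_norm_prod_sub s r hr _ h
  rw [hcard] at this
  simpa using mul_le_mul_of_nonneg_left this (abs_nonneg p.leadingCoeff)

/-- A polynomial of exact degree `d` with positive leading coefficient `a`, non-negative on
`[τ/2, τ]`, is at least `c_d · a · τ^d` on a subset of `[τ/2, τ]` of measure at least `τ/4`. -/
theorem polynomial_anticoncentration (d : ℕ) (hd : 1 ≤ d) :
    ∃ c : ℝ, 0 < c ∧ ∀ p : Polynomial ℝ, p.natDegree = d → 0 < p.leadingCoeff →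
      ∀ τ : ℝ, 0 < τ → (∀ s ∈ Set.Icc (τ / 2) τ, 0 ≤ p.eval s) →
        ENNReal.ofReal (τ / 4) ≤
          volume {s ∈ Set.Icc (τ / 2) τ | c * p.leadingCoeff * τ ^ d ≤ p.eval s} := by
  have hd0 : (0 : ℝ) < d := by exact_mod_cast hd
  refine ⟨(1 / (8 * d)) ^ d, by positivity, ?_⟩
  intro p hp ha τ hτ hnn
  set r : ℝ := τ / (8 * d) with hr
  have hr0 : 0 < r := by positivity
  set F := (p.map (algebraMap ℝ ℂ)).roots.toFinset with hF
  set U : Set ℝ := ⋃ z ∈ F, Metric.ball (z.re) r with hU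
  have hcard : F.card ≤ d :=
    (Multiset.toFinset_card_le _).trans ((Polynomial.card_roots' _).trans
      (by rw [Polynomial.natDegree_map, hp]))
  have hvolU : volume U ≤ ENNReal.ofReal (τ / 4) := by
    refine (measure_biUnion_finset_le F _).trans ?_
    simp only [Real.volume_ball, Finset.sum_const, nsmul_eq_mul]
    rw [← ENNReal.ofReal_natCast, ← ENNReal.ofReal_mul (by positivity)]
    apply ENNReal.ofReal_le_ofReal
    have h1 : (F.card : ℝ) ≤ d := by exact_mod_cast hcard
    calc (F.card : ℝ) * (2 * r) ≤ d * (2 * r) := by gcongr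
      _ = τ / 4 := by rw [hr]; field_simp; norm_num
  have hsub : Set.Icc (τ / 2) τ \ U ⊆
      {s ∈ Set.Icc (τ / 2) τ | (1 / (8 * d)) ^ d * p.leadingCoeff * τ ^ d ≤ p.eval s} := by
    rintro s ⟨hs, hsU⟩
    refine ⟨hs, ?_⟩
    have key := leadingCoeff_mul_pow_le_abs_eval p s r hr0.le (by
      intro z hz
      by_contra hlt
      refine hsU (Set.mem_biUnion (Multiset.mem_toFinset.2 hz) ?_)
      rw [Metric.mem_ball, Real.dist_eq]
      exact not_le.1 hlt)
    rw [abs_of_pos ha, abs_of_nonneg (hnn s hs), hp] at key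
    refine le_trans (le_of_eq ?_) key
    rw [hr, div_pow, div_pow, one_pow]
    ring
  calc ENNReal.ofReal (τ / 4)
      = ENNReal.ofReal (τ / 2) - ENNReal.ofReal (τ / 4) := by
        rw [← ENNReal.ofReal_sub _ (by positivity)]; congr 1; ring
    _ ≤ volume (Set.Icc (τ / 2) τ) - volume U := by
        rw [Real.volume_Icc, sub_half]
        exact tsub_le_tsub_left hvolU _
    _ ≤ volume (Set.Icc (τ / 2) τ \ U) := le_measure_sdiff
    _ ≤ _ := measure_mono hsub
end
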